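/- arXiv:1907.05231 — 4 statements merged into one kernel-verified Lean document; each statement's English description precedes it below -/
import Mathlib

section
/- In a finite Markov reward process with transition kernel p and deterministic reward r, suppose two distinct states x_i and x_j are isotopic, i.e. r(x_i) = r(x_j) and p(y | x_i) = p(y | x_j) for every state y ∉ {x_i, x_j}. Let c : S → S be the collapse map sending x_j to x_i and fixing every other state. Then the pushforward of the one-step transition distribution from x_i under c equals the pushforward of the one-step transition distribution from x_j under c, i.e. PMF.map c (p x_i) = PMF.map c (p x_j). -/
/-! The collapse map is injective away from the fibre `{xi, xj}` over `xi`, so isotopy makes the two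
pushforwards agree at every point other than `xi`. Both have total mass 1, so they also agree at
`xi` (`pmf_ext_of_forall_ne`). -/

/-- A distribution is determined by its values off a single point, since its total mass is 1. -/
theorem pmf_ext_of_forall_ne {α : Type*} {q q' : PMF α} (a : α)
    (h : ∀ y, y ≠ a → q y = q' y) : q = q' := by
  classical
  have hrest : (∑' y, if y = a then 0 else q y) = ∑' y, if y = a then 0 else q' y :=
    tsum_congr fun y => by
      split_ifs with hy
      · rfl
      · exact h y hy
  have hfin : (∑' y, if y = a then 0 else q' y) ≠ ⊤ := by
    refine ne_top_of_le_ne_top q'.tsum_coe_ne_top (ENNReal.tsum_le_tsum fun y => ?_)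
    split_ifs <;> simp
  have hsum : (∑' y, q y) = ∑' y, q' y := by rw [q.tsum_coe, q'.tsum_coe]
  rw [ENNReal.tsum_eq_add_tsum_ite (f := q) a, ENNReal.tsum_eq_add_tsum_ite (f := q') a,
    hrest] at hsum
  ext y
  by_cases hy : y = a
  · rw [hy]
    exact (ENNReal.add_left_inj hfin).1 hsum
  · exact h y hy

/-- If two distinct states `xi`, `xj` of a finite Markov reward process
are isotopic (same reward and same transition probabilities to every other state),
then the pushforwards of their one-step transition distributions under the collapse
map `c` (sending `xj` to `xi` and fixing everything else) coincide. -/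
theorem sat_isotopic_collapse_map_eq
    {S : Type} [Fintype S] [Nonempty S] [DecidableEq S]
    (p : S → PMF S) (μ : PMF S) (r : S → ℝ)
    (xi xj : S) (hne : xi ≠ xj)
    (hr : r xi = r xj)
    (hp : ∀ y : S, y ≠ xi → y ≠ xj → p xi y = p xj y) :
    PMF.map (fun y => if y = xj then xi else y) (p xi)
      = PMF.map (fun y => if y = xj then xi else y) (p xj) := by
  -- Every fibre of the collapse map over `y ≠ xi` avoids both `xi` and `xj`.
  refine pmf_ext_of_forall_ne xi fun y hy => ?_
  simp only [PMF.map_apply]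
  refine tsum_congr fun a => ?_
  by_cases hj : a = xj
  · simp [hj, hy]
  · by_cases hya : y = a
    · simp [hj, hya, hp a (hya ▸ hy) hj]
    · simp [hj, hya]
end

section
/- In a finite Markov reward process with transition kernel p, suppose two distinct states x_i and x_j are isotopic and let c be the collapse map sending x_j to x_i. Define the lumped kernel p' on the subtype S' = {x : S // x ≠ x_j} by p'(x) = the pushforward PMF.map c (p x.val), regarded as a distribution on S' (it assigns probability 0 to x_j). Then the collapse map is a one-step Markov chain homomorphism: for every state x ∈ S, the pushforward of p(· | x) under c agrees with p'(c(x)), i.e. for every z ∈ S with z ≠ x_j, (PMF.map c (p x)) z = p'(c x) z. -/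
/-!
Only `x = xj` needs an argument, since `collapse` fixes every other state. There the claim is
that `p xi` and `p xj` have the same pushforward: they agree off `{xi, xj}`, so
the pushforwards agree off the merged point, and total mass one forces agreement there too
(`map_collapse_eq`).
-/

noncomputable section

/-- The collapse map into the lumped state space `S' = {s : S // s ≠ xj}`:
it sends `xj` to `xi` and fixes every other state. -/
def collapse {S : Type} (xi xj : S) (hne : xi ≠ xj) [DecidableEq S] (x : S) :
    {s : S // s ≠ xj} :=
  if h : x = xj then ⟨xi, hne⟩ else ⟨x, h⟩

/-- The lumped kernel on the subtype `S' = {s : S // s ≠ xj}`: the pushforward of the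
one-step transition distribution under the collapse map, regarded as a distribution
on `S'` (it assigns probability 0 to `xj`). -/
def lumpedKernel {S : Type} [DecidableEq S] (p : S → PMF S) (xi xj : S) (hne : xi ≠ xj) :
    {s : S // s ≠ xj} → PMF {s : S // s ≠ xj} :=
  fun x => PMF.map (collapse xi xj hne) (p x.val)

/-- Total mass one forces the remaining value: two distributions that agree off a single
point are equal. -/
theorem pmf_eq_of_eq_off_point {α : Type} (q q' : PMF α) (a : α)
    (h : ∀ w, w ≠ a → q w = q' w) : q = q' := by
  classical
  have hq := q.tsum_coe
  have hq' := q'.tsum_coe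
  rw [ENNReal.tsum_eq_add_tsum_ite a] at hq hq'
  have hrest : (∑' w, if w = a then 0 else q w) = ∑' w, if w = a then 0 else q' w := by
    refine tsum_congr fun w => ?_
    split_ifs with hw
    · rfl
    · exact h w hw
  rw [← hrest] at hq'
  -- The remainder is at most one, hence finite, so it can be cancelled in `ℝ≥0∞`.
  have hfin : (∑' w, if w = a then 0 else q w) ≠ ⊤ := by
    intro ht
    simp [ht] at hq
  ext w
  by_cases hw : w = a
  · subst hw
    exact (ENNReal.add_left_inj hfin).1 (hq.trans hq'.symm)
  · exact h w hw

/-- Distributions agreeing off `{xi, xj}` have the same pushforward: the collapse merges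
these two points into one, and off that point the pushforwards agree. -/
theorem map_collapse_eq {S : Type} [DecidableEq S] (q q' : PMF S) (xi xj : S) (hne : xi ≠ xj)
    (h : ∀ y, y ≠ xi → y ≠ xj → q y = q' y) :
    PMF.map (collapse xi xj hne) q = PMF.map (collapse xi xj hne) q' := by
  refine pmf_eq_of_eq_off_point _ _ ⟨xi, hne⟩ fun w hw => ?_
  rw [PMF.map_apply, PMF.map_apply]
  refine tsum_congr fun y => ?_
  split_ifs with hy
  · refine h y ?_ ?_
    · rintro rfl
      exact hw (by simp [hy, collapse, hne])
    · rintro rfl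
      exact hw (by simp [hy, collapse])
  · rfl

/-- Evaluating the pushforward on `S` away from `xj` is evaluating the pushforward on the
subtype. -/
theorem map_ite_apply {S : Type} [DecidableEq S] (q : PMF S) (xi xj : S) (hne : xi ≠ xj)
    (z : S) (hz : z ≠ xj) :
    (PMF.map (fun y => if y = xj then xi else y) q) z
      = (PMF.map (collapse xi xj hne) q) ⟨z, hz⟩ := by
  rw [PMF.map_apply, PMF.map_apply]
  refine tsum_congr fun y => ?_
  by_cases hy : y = xj <;> simp [collapse, hy]

/-- the collapse map is a one-step Markov chain homomorphism: for every
state `x`, the pushforward of `p(· | x)` under the collapse map agrees with the lumped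
kernel evaluated at the collapsed state `c x`, on every state `z ≠ xj`. -/
theorem sat_collapse_one_step_homomorphism
    {S : Type} [Fintype S] [Nonempty S] [DecidableEq S]
    (p : S → PMF S) (μ : PMF S) (r : S → ℝ)
    (xi xj : S) (hne : xi ≠ xj)
    (hr : r xi = r xj)
    (hp : ∀ y : S, y ≠ xi → y ≠ xj → p xi y = p xj y) :
    ∀ x : S, ∀ z : S, ∀ hz : z ≠ xj,
      (PMF.map (fun y => if y = xj then xi else y) (p x)) z
        = (lumpedKernel p xi xj hne (collapse xi xj hne x)) ⟨z, hz⟩ := by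
  intro x z hz
  rw [map_ite_apply _ xi xj hne z hz]
  by_cases hx : x = xj
  · subst hx
    have hc : (collapse xi x hne x).val = xi := by simp [collapse]
    rw [lumpedKernel, hc, map_collapse_eq (p xi) (p x) xi x hne hp]
  · have hc : (collapse xi xj hne x).val = x := by simp [collapse, hx]
    rw [lumpedKernel, hc]
end
end

section
/- (Reward preservation in state lumping, reward-sequence version; paper's Theorem 2.) In a finite Markov reward process (S, p, μ, r), suppose two distinct states x_i and x_j are isotopic and let c be the collapse map sending x_j to x_i. Define the lumped Markov reward process on S' = {x : S // x ≠ x_j} with initial distribution μ' = PMF.map c μ, kernel p'(x) = PMF.map c (p x.val), and reward r'(x) = r(x.val). Then for every horizon N ≥ 1, the joint law of the reward sequence (r(X₁), …, r(X_N)) of the original chain equals the joint law of the reward sequence (r'(X'₁), …, r'(X'_N)) of the lumped chain, where both laws are PMFs on Fin N → ℝ obtained as pushforwards of the respective trajectory laws. -/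
/-!
The collapse map `c` lumps the chain strongly: collapsing after a step from `x` has the law of a
step of the lumped chain from `c x`. This only needs an argument at `x = xj`, where it says that
`p xi` and `p xj` have the same pushforward under `c`. By isotopy these pushforwards agree away from
`xi`, and since both have total mass one they agree at `xi` too. Hence the pushforward of the
trajectory law under coordinatewise collapse is the trajectory law of the lumped chain
(`map_collapse_traj`). As `r xi = r xj`, rewards are unchanged by collapsing, and the equality of
reward laws is a further pushforward of this one.
-/

noncomputable section

/-- The joint law `Traj_{n+1}(μ, p)` of the first `n+1` states of a Markov chain with
initial distribution `μ` and transition kernel `p`, defined by iterated `PMF.bind`. -/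
def traj {S : Type} (p : S → PMF S) (μ : PMF S) : (n : ℕ) → PMF (Fin (n + 1) → S)
  | 0 => μ.map fun x => fun _ => x
  | n + 1 => (traj p μ n).bind fun f => (p (f (Fin.last n))).map fun y => Fin.snoc f y

/-- Two probability mass functions that agree away from one point are equal: the mass at that point
is the complement of the rest. -/
theorem pmf_eq_of_eq_off_point_s3 {α : Type} (P Q : PMF α) (b : α)
    (h : ∀ y, y ≠ b → P y = Q y) : P = Q := by
  classical
  have hrest : (∑' x, if x = b then 0 else P x) = ∑' x, if x = b then 0 else Q x := by
    refine tsum_congr fun x => ?_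
    split_ifs with hx
    · rfl
    · exact h x hx
  have hP := P.tsum_coe
  have hQ := Q.tsum_coe
  rw [ENNReal.tsum_eq_add_tsum_ite b] at hP hQ
  rw [← hrest] at hQ
  have hfin : (∑' x, if x = b then 0 else P x) ≠ ⊤ :=
    ne_top_of_le_ne_top ENNReal.one_ne_top (hP ▸ le_add_self)
  ext y
  by_cases hy : y = b
  · subst hy
    exact (ENNReal.add_left_inj hfin).1 (hP.trans hQ.symm)
  · exact h y hy

theorem map_collapse_isotopic {S : Type} [DecidableEq S] (p : S → PMF S) (xi xj : S)
    (hne : xi ≠ xj) (hp : ∀ y : S, y ≠ xi → y ≠ xj → p xi y = p xj y) :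
    PMF.map (collapse xi xj hne) (p xi) = PMF.map (collapse xi xj hne) (p xj) := by
  refine pmf_eq_of_eq_off_point_s3 _ _ ⟨xi, hne⟩ fun y hy => ?_
  rw [PMF.map_apply, PMF.map_apply]
  refine tsum_congr fun a => ?_
  split_ifs with ha
  · -- the fibre of `c` over a point other than `xi` avoids both `xi` and `xj`
    refine hp a ?_ ?_
    · rintro rfl
      exact hy (by rw [ha, collapse, dif_neg hne])
    · rintro rfl
      exact hy (by rw [ha, collapse, dif_pos rfl])
  · rfl

/-- Strong lumpability: a step of the original chain followed by collapsing has the law of a step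
of the lumped chain from the collapsed state. -/
theorem lumpedKernel_collapse {S : Type} [DecidableEq S] (p : S → PMF S) (xi xj : S)
    (hne : xi ≠ xj) (hp : ∀ y : S, y ≠ xi → y ≠ xj → p xi y = p xj y) (x : S) :
    lumpedKernel p xi xj hne (collapse xi xj hne x) = PMF.map (collapse xi xj hne) (p x) := by
  by_cases hx : x = xj
  · subst hx
    rw [collapse, dif_pos rfl]
    exact map_collapse_isotopic p xi x hne hp
  · rw [collapse, dif_neg hx]
    rfl

theorem map_collapse_traj {S : Type} [DecidableEq S] (p : S → PMF S) (μ : PMF S) (xi xj : S)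
    (hne : xi ≠ xj) (hp : ∀ y : S, y ≠ xi → y ≠ xj → p xi y = p xj y) (n : ℕ) :
    PMF.map (fun f i => collapse xi xj hne (f i)) (traj p μ n) =
      traj (lumpedKernel p xi xj hne) (PMF.map (collapse xi xj hne) μ) n := by
  induction n with
  | zero =>
    simp only [traj, PMF.map_comp]
    rfl
  | succ n ih =>
    rw [traj, traj, ← ih, PMF.map_bind, PMF.bind_map]
    congr 1
    funext f
    simp only [Function.comp_apply]
    rw [lumpedKernel_collapse p xi xj hne hp, PMF.map_comp, PMF.map_comp]
    congr 1
    funext y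
    exact Fin.comp_snoc (collapse xi xj hne) f y

/-- reward preservation in state lumping; paper's Theorem 2: if the two
distinct states `xi`, `xj` are isotopic, then for every horizon `N = n + 1 ≥ 1`, the
joint law of the reward sequence `(r(X₁), …, r(X_N))` of the original chain equals the
joint law of the reward sequence `(r'(X'₁), …, r'(X'_N))` of the lumped chain, where
`r'(x) = r(x.val)`. -/
theorem sat_isotopic_lumping_reward_sequence_law
    {S : Type} [Fintype S] [Nonempty S] [DecidableEq S]
    (p : S → PMF S) (μ : PMF S) (r : S → ℝ)
    (xi xj : S) (hne : xi ≠ xj)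
    (hr : r xi = r xj)
    (hp : ∀ y : S, y ≠ xi → y ≠ xj → p xi y = p xj y) :
    ∀ n : ℕ,
      PMF.map (fun f => fun i : Fin (n + 1) => r (f i)) (traj p μ n)
        = PMF.map (fun f => fun i : Fin (n + 1) => r (f i).val)
            (traj (lumpedKernel p xi xj hne) (PMF.map (collapse xi xj hne) μ) n) := by
  intro n
  have hc : ∀ x, r (collapse xi xj hne x).val = r x := by
    intro x
    by_cases hx : x = xj
    · rw [collapse, dif_pos hx, hx, hr]
    · rw [collapse, dif_neg hx]
  rw [← map_collapse_traj p μ xi xj hne hp n, PMF.map_comp]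
  congr 1
  funext f i
  exact (hc (f i)).symm
end
end

section
/- (State-augmentation transformation preserves the reward-sequence law; paper's Theorem 1, finite-horizon, policy-induced form.) Let S, A be finite nonempty types and J a finite nonempty set of real numbers. Let p : S → A → PMF S be a transition kernel, d : S → A → S → PMF J a reward distribution, μ : PMF S an initial distribution, and π : S → PMF A a stationary randomized policy. For horizon N ≥ 1, let L_N : PMF (Fin N → ℝ) be the law of the reward sequence (R₁, …, R_N) of the induced process, obtained by sampling X₁ ~ μ and, for t = 1, …, N: A_t ~ π(X_t), X_{t+1} ~ p(X_t, A_t), R_t ~ d(X_t, A_t, X_{t+1}) (formally via iterated PMF.bind). Define the transformed Markov chain on the state space S† = (S × A × S × J) ⊕ S with: initial distribution μ† the pushforward of μ under the right injection; transition kernel p†_π assigning, from any state with current-original-state x (i.e., from inr x, or from inl (w, a, x, i)), probability π(a' | x) · p(y | x, a') · d(j | x, a', y) to inl (x, a', y, j); and deterministic reward r†(inl (x, a, y, i)) = i, r†(inr x) = 0. Then for every N ≥ 1, the law of (r†(X†₂), …, r†(X†_{N+1})) — the rewards of the transformed chain at epochs 2 through N+1 — equals L_N. -/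
/-! The transition law `pAug` out of an augmented state depends only on its current original
state, and the reward of the state it moves to is the reward just sampled. Conditioning the
augmented chain on its first step (`traj_succ_eq_bind_cons`) therefore yields the recursion that
defines `rewardSeqLaw`, which gives the claim by induction on the horizon from an arbitrary
augmented starting state (`map_rAug_traj`). -/

noncomputable section

/-- The law of the reward sequence `(R₁, …, R_n)` of the MDP with transition kernel
`p`, reward distribution `d` and stationary randomized policy `π`, started at `x`:
for `t = 1, …, n`, sample `A_t ~ π(X_t)`, `X_{t+1} ~ p(X_t, A_t)`,
`R_t ~ d(X_t, A_t, X_{t+1})`, via iterated `PMF.bind`. -/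
def rewardSeqLaw {S A : Type} {J : Finset ℝ}
    (p : S → A → PMF S) (d : S → A → S → PMF J) (π : S → PMF A) :
    (n : ℕ) → S → PMF (Fin n → ℝ)
  | 0, _ => PMF.pure (fun i => i.elim0)
  | n + 1, x =>
      (π x).bind fun a => (p x a).bind fun y => (d x a y).bind fun j =>
        (rewardSeqLaw p d π n y).map fun f => Fin.cons (j : ℝ) f

/-- The augmented state space of the state-augmentation transformation:
`inl (x, a, y, i)` records the previous state, action, current state and last reward,
and `inr x` is the null initial state for the original state `x`. -/
abbrev SAug (S A : Type) (J : Finset ℝ) : Type := (S × A × S × (J : Finset ℝ)) ⊕ S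

/-- The current-original-state component of an augmented state. -/
def curOrig {S A : Type} {J : Finset ℝ} : SAug S A J → S
  | Sum.inl (_, _, y, _) => y
  | Sum.inr x => x

/-- The transformed transition kernel `p†_π`: from any augmented state with
current-original-state `x`, it assigns probability `π(a' | x)·p(y | x, a')·d(j | x, a', y)`
to `inl (x, a', y, j)`. -/
def pAug {S A : Type} {J : Finset ℝ}
    (p : S → A → PMF S) (d : S → A → S → PMF J) (π : S → PMF A) :
    SAug S A J → PMF (SAug S A J) :=
  fun s =>
    (π (curOrig s)).bind fun a => (p (curOrig s) a).bind fun y =>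
      (d (curOrig s) a y).map fun j => Sum.inl (curOrig s, a, y, j)

/-- The deterministic state-based reward of the transformed chain. -/
def rAug {S A : Type} {J : Finset ℝ} : SAug S A J → ℝ
  | Sum.inl (_, _, _, i) => (i : ℝ)
  | Sum.inr _ => 0

/-- First-step decomposition: `traj` appends states at the end, whereas the same law arises by
sampling the first state `x` and prepending it to a trajectory started from `p x`. -/
theorem traj_succ_eq_bind_cons {S : Type} (p : S → PMF S) (μ : PMF S) (n : ℕ) :
    traj p μ (n + 1) =
      μ.bind fun x => (traj p (p x) n).map fun f => (Fin.cons x f : Fin (n + 2) → S) := by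
  induction n with
  | zero =>
    simp only [traj, PMF.bind_map, PMF.map_comp]
    congr 1
    funext x
    simp only [Function.comp_apply]
    congr 1
    funext y i
    refine Fin.cases ?_ (fun j => ?_) i
    · exact Fin.snoc_castSucc (α := fun _ => S) (i := (0 : Fin 1)) ..
    · rw [Subsingleton.elim j (Fin.last 0)]
      exact Fin.snoc_last (α := fun _ => S) ..
  | succ n ih =>
    rw [traj, ih, PMF.bind_bind]
    congr 1
    funext x
    rw [PMF.bind_map, traj, PMF.map_bind]
    congr 1
    funext f
    simp only [Function.comp_apply, PMF.map_comp]
    rw [← Fin.succ_last, Fin.cons_succ]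
    congr 1
    funext y
    exact (Fin.cons_snoc_eq_snoc_cons x f y).symm

/-- Started with one transition out of any augmented state `s`, the rewards of the augmented
chain have the law of the reward sequence started at the current original state of `s`. -/
theorem map_rAug_traj {S A : Type} {J : Finset ℝ}
    (p : S → A → PMF S) (d : S → A → S → PMF J) (π : S → PMF A) (n : ℕ) (s : SAug S A J) :
    (traj (pAug p d π) (pAug p d π s) n).map (fun g t => rAug (g t)) =
      rewardSeqLaw p d π (n + 1) (curOrig s) := by
  induction n generalizing s with
  | zero =>
    simp only [traj, rewardSeqLaw, PMF.map_comp, PMF.pure_map]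
    rw [pAug]
    simp only [PMF.map_bind, PMF.map_comp]
    congr 1; funext a; congr 1; funext y
    rw [← PMF.bind_pure_comp]
    congr 1; funext j
    simp only [Function.comp_apply]
    congr 1; funext i
    obtain rfl : i = 0 := Fin.fin_one_eq_zero i
    rfl
  | succ n ih =>
    rw [traj_succ_eq_bind_cons, PMF.map_bind, rewardSeqLaw]
    have key : ∀ x : SAug S A J,
        ((traj (pAug p d π) (pAug p d π x) n).map
          fun f => (Fin.cons x f : Fin (n + 2) → SAug S A J)).map (fun g t => rAug (g t)) =
        (rewardSeqLaw p d π (n + 1) (curOrig x)).map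
          fun f => (Fin.cons (rAug x) f : Fin (n + 2) → ℝ) := by
      intro x
      rw [← ih, PMF.map_comp, PMF.map_comp]
      congr 1
      funext f t
      refine Fin.cases ?_ (fun j => ?_) t <;> simp
    simp only [key]
    rw [pAug]
    simp only [PMF.bind_bind, PMF.bind_map]
    rfl

/-- the state-augmentation transformation preserves the reward-sequence
law; paper's Theorem 1, finite-horizon, policy-induced form: for every horizon
`N = n + 1 ≥ 1`, the law of the rewards `(r†(X†₂), …, r†(X†_{N+1}))` of the transformed
Markov chain (with initial distribution `μ† = PMF.map Sum.inr μ`) equals the law `L_N`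
of the reward sequence `(R₁, …, R_N)` of the original policy-induced process. -/
theorem sat_preserves_reward_sequence_law
    {S A : Type} [Fintype S] [Nonempty S] [Fintype A] [Nonempty A]
    (J : Finset ℝ) (hJ : J.Nonempty)
    (p : S → A → PMF S) (d : S → A → S → PMF J)
    (μ : PMF S) (π : S → PMF A) :
    ∀ n : ℕ,
      PMF.map (fun g => fun t : Fin (n + 1) => rAug (g t.succ))
          (traj (pAug p d π) (PMF.map Sum.inr μ) (n + 1))
        = μ.bind (fun x => rewardSeqLaw p d π (n + 1) x) := by
  intro n
  rw [traj_succ_eq_bind_cons, PMF.bind_map, PMF.map_bind]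
  congr 1
  funext x
  rw [Function.comp_apply, PMF.map_comp]
  exact map_rAug_traj p d π n (Sum.inr x)
end
end
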